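/- A trace τ over (T,X,V) is PC if and only if its split trace τ_split is SER. (Lemma 4 of the paper.) -/

import Mathlib

open scoped Classical

/-- A trace over `(T, X, V)`: transactions `T`, shared variables `X`, values `V`.
Each transaction has a read set `RS` with read values `rdval`, a write set `WS`
with last-written values `wrval`; there is an initial transaction `t0`, a
program order `po`, per-variable read-from relations `rf x` and per-variable
store orders `sto x`. -/
structure TxnTrace (T X V : Type*) where
  RS : T → Set X
  WS : T → Set X
  rdval : T → X → V
  wrval : T → X → V
  t0 : T
  po : T → T → Prop
  rf : X → T → T → Prop
  sto : X → T → T → Prop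

/-- a strict partial order: irreflexive and transitive binary relation -/
def StrictPartialRel {α : Type*} (r : α → α → Prop) : Prop :=
  (∀ a, ¬ r a a) ∧ ∀ a b c, r a b → r b c → r a c

/-- a strict total order -/
def StrictTotalRel {α : Type*} (r : α → α → Prop) : Prop :=
  StrictPartialRel r ∧ ∀ a b, a ≠ b → r a b ∨ r b a

/-- axiom Prefix: `arb ; vis ⊆ vis` -/
def PrefixAx {α : Type*} (vis arb : α → α → Prop) : Prop :=
  ∀ a b c, arb a b → vis b c → vis a c

/-- `vis` is a strict partial order, `arb` a strict total order, `vis ⊆ arb` -/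
def GoodPair {α : Type*} (vis arb : α → α → Prop) : Prop :=
  StrictPartialRel vis ∧ StrictTotalRel arb ∧ ∀ a b, vis a b → arb a b

namespace TxnTrace

variable {T X V : Type*} (τ : TxnTrace T X V)

/-- the well-formedness conditions of a trace -/
structure WellFormed : Prop where
  rs_init : τ.RS τ.t0 = ∅
  ws_init : τ.WS τ.t0 = Set.univ
  po_irrefl : ∀ t, ¬ τ.po t t
  po_trans : ∀ a b c, τ.po a b → τ.po b c → τ.po a c
  po_init : ∀ t, t ≠ τ.t0 → τ.po τ.t0 t
  rf_wf : ∀ x t' t, τ.rf x t' t →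
    t' ≠ t ∧ x ∈ τ.RS t ∧ x ∈ τ.WS t' ∧ τ.wrval t' x = τ.rdval t x
  rf_total : ∀ t x, x ∈ τ.RS t → ∃! t', τ.rf x t' t
  sto_dom : ∀ x a b, τ.sto x a b → x ∈ τ.WS a ∧ x ∈ τ.WS b
  sto_irrefl : ∀ x a, ¬ τ.sto x a a
  sto_trans : ∀ x a b c, τ.sto x a b → τ.sto x b c → τ.sto x a c
  sto_total : ∀ x a b, x ∈ τ.WS a → x ∈ τ.WS b → a ≠ b → τ.sto x a b ∨ τ.sto x b a

/-- `rf = ⋃ x, rf x` -/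
def rfR (a b : T) : Prop := ∃ x, τ.rf x a b

/-- `sto = ⋃ x, sto x` -/
def stoR (a b : T) : Prop := ∃ x, τ.sto x a b

/-- the conflict relation: `(t1,t3) ∈ cf` iff `t1 ≠ t3` and there are `x`, `t2`
with `(t2,t1) ∈ rf_x` and `(t2,t3) ∈ sto_x` -/
def cf (a b : T) : Prop := a ≠ b ∧ ∃ x w, τ.rf x w a ∧ τ.sto x w b

/-- `vis0 = po ∪ rf` -/
def vis0 (a b : T) : Prop := τ.po a b ∨ τ.rfR a b

/-- `arb0 = po ∪ rf ∪ sto` -/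
def arb0 (a b : T) : Prop := τ.po a b ∨ τ.rfR a b ∨ τ.stoR a b

/-- happens-before: `(po ∪ rf ∪ sto ∪ cf)⁺` -/
def hb : T → T → Prop := Relation.TransGen (fun a b => τ.arb0 a b ∨ τ.cf a b)

/-- axiom PoCo: `vis0⁺ ⊆ vis` -/
def PoCo (vis : T → T → Prop) : Prop := ∀ a b, Relation.TransGen τ.vis0 a b → vis a b

/-- axiom CoArb: `arb0⁺ ⊆ arb` -/
def CoArb (arb : T → T → Prop) : Prop := ∀ a b, Relation.TransGen τ.arb0 a b → arb a b

/-- axiom RetVal: every read of `x` in `t` reads from the `arb`-greatest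
`vis`-predecessor of `t` writing `x` -/
def RetVal (vis arb : T → T → Prop) : Prop :=
  ∀ t x, x ∈ τ.RS t → ∃ t00,
    (vis t00 t ∧ x ∈ τ.WS t00) ∧
    (∀ t', vis t' t → x ∈ τ.WS t' → t' ≠ t00 → arb t' t00) ∧
    τ.rf x t00 t


/-- axiom Conflict: `sto ⊆ vis` -/
def ConflictAx (vis : T → T → Prop) : Prop := ∀ a b, τ.stoR a b → vis a b


/-- causal consistency -/
def IsCC : Prop :=
  ∃ vis arb, GoodPair vis arb ∧ τ.PoCo vis ∧ τ.CoArb arb ∧ τ.RetVal vis arb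

/-- prefix consistency -/
def IsPC : Prop :=
  ∃ vis arb, GoodPair vis arb ∧ τ.PoCo vis ∧ τ.CoArb arb ∧ τ.RetVal vis arb ∧
    PrefixAx vis arb

/-- snapshot isolation -/
def IsSI : Prop :=
  ∃ vis arb, GoodPair vis arb ∧ τ.PoCo vis ∧ τ.CoArb arb ∧ τ.RetVal vis arb ∧
    PrefixAx vis arb ∧ τ.ConflictAx vis

/-- serializability: some strict total order `arb` with `arb0⁺ ⊆ arb` satisfies
RetVal with `vis = arb` -/
def IsSER : Prop :=
  ∃ arb, StrictTotalRel arb ∧ τ.CoArb arb ∧ τ.RetVal arb arb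

/-- the read part `t_rd` of a transaction in the split trace -/
def rdPart (t : T) : T × Bool := (t, false)

/-- the write part `t_wr` of a transaction in the split trace;
the initial transaction `t0` is kept unchanged and plays both roles -/
noncomputable def wrPart (t : T) : T × Bool := if t = τ.t0 then (t, false) else (t, true)

/-- the split trace `τ_split`: every transaction `t ≠ t0` is split into a read
part `t_rd` and a write part `t_wr`; `po'` is the smallest transitive relation
containing `(t_rd, t_wr)` for every split `t` and `(u_wr, v_rd)` for `(u,v) ∈ po`;
`rf'_x = {(u_wr, v_rd) : (u,v) ∈ rf_x}`; `sto'_x = {(u_wr, v_wr) : (u,v) ∈ sto_x}`.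
(The pair `(t0, true)` is an unused dummy element with empty read and write sets and
no incident relations.) -/
noncomputable def split : TxnTrace (T × Bool) X V where
  RS p := if p = rdPart p.1 then τ.RS p.1 else ∅
  WS p := if p = τ.wrPart p.1 then τ.WS p.1 else ∅
  rdval p x := τ.rdval p.1 x
  wrval p x := τ.wrval p.1 x
  t0 := (τ.t0, false)
  po := Relation.TransGen (fun a b =>
    (∃ t, t ≠ τ.t0 ∧ a = rdPart t ∧ b = τ.wrPart t) ∨
    (∃ u v, τ.po u v ∧ a = τ.wrPart u ∧ b = rdPart v))
  rf := fun x a b => ∃ u v, τ.rf x u v ∧ a = τ.wrPart u ∧ b = rdPart v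
  sto := fun x a b => ∃ u v, τ.sto x u v ∧ a = τ.wrPart u ∧ b = τ.wrPart v

end TxnTrace

/-!
A serialization of the split trace places every read part at a cut of the order of the write parts:
the writes before it are exactly those its transaction sees. Prefix says that the `vis`-predecessors
of a transaction form a lower set of `arb`, which is what makes them such a cut.
Thus a serialization `r` restricts to `vis u v := r u_wr v_rd` and `arb u v := r u_wr v_wr`;
conversely, ordering the parts by the lower set of writes preceding them, reads before writes at
equal cuts, recovers a serialization from `vis` and `arb`. Under this correspondence the axioms on
the two sides match one by one.
-/

section Relations

variable {α β : Type*}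

theorem strictTotalRel_of_injective [LinearOrder β] {f : α → β} (hf : Function.Injective f) :
    StrictTotalRel fun a b => f a < f b :=
  ⟨⟨fun _ => lt_irrefl _, fun _ _ _ => lt_trans⟩, fun _ _ hab => lt_or_gt_of_ne (hf.ne hab)⟩

theorem StrictPartialRel.isTrans {r : α → α → Prop} (hr : StrictPartialRel r) : IsTrans α r :=
  ⟨hr.2⟩

theorem StrictTotalRel.isStrictTotalOrder {r : α → α → Prop} (hr : StrictTotalRel r) :
    IsStrictTotalOrder α r where
  irrefl := hr.1.1
  trans := hr.1.2
  trichotomous a b hab hba := by_contra fun hne => (hr.2 a b hne).elim hab hba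

theorem forall_transGen_imp_iff {r s : α → α → Prop} [IsTrans α s] :
    (∀ a b, Relation.TransGen r a b → s a b) ↔ ∀ a b, r a b → s a b :=
  ⟨fun h a b hab => h a b (.single hab), fun h => Relation.transGen_minimal h⟩

theorem lowerSet_Iio_lt_iff_mem [LinearOrder α] {a : α} {s : LowerSet α} :
    LowerSet.Iio a < s ↔ a ∈ s := by
  rw [← not_le]
  refine ⟨fun h => by_contra fun ha => h fun b hb => ?_, fun ha h => lt_irrefl a (h ha)⟩
  exact lt_of_not_ge fun hab => ha (s.lower hab hb)

end Relations

namespace TxnTrace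

variable {T X V : Type*} (τ : TxnTrace T X V)

theorem poCo_and_coArb_iff {vis arb : T → T → Prop} (hgood : GoodPair vis arb) :
    τ.PoCo vis ∧ τ.CoArb arb ↔
      (∀ u v, τ.vis0 u v → vis u v) ∧ ∀ u v, τ.stoR u v → arb u v := by
  have := hgood.1.isTrans
  have := hgood.2.1.1.isTrans
  rw [PoCo, CoArb, forall_transGen_imp_iff, forall_transGen_imp_iff]
  refine and_congr_right fun hvis0 => ⟨fun harb0 u v huv => harb0 u v (.inr (.inr huv)), ?_⟩
  rintro hsto u v (huv | huv | huv)
  · exact hgood.2.2 u v (hvis0 u v (.inl huv))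
  · exact hgood.2.2 u v (hvis0 u v (.inr huv))
  · exact hsto u v huv

section SplitTrace

theorem fst_wrPart (t : T) : (τ.wrPart t).1 = t := by
  unfold wrPart; split_ifs <;> rfl

theorem wrPart_injective : Function.Injective τ.wrPart :=
  Function.LeftInverse.injective (g := Prod.fst) τ.fst_wrPart

theorem rdPart_eq_wrPart_iff {t : T} : rdPart t = τ.wrPart t ↔ t = τ.t0 := by
  unfold rdPart wrPart; split_ifs <;> simp [*]

theorem mem_RS_split_iff {p : T × Bool} {x : X} :
    x ∈ τ.split.RS p ↔ ∃ t, p = rdPart t ∧ x ∈ τ.RS t := by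
  simp only [split]
  split_ifs with hp
  · exact ⟨fun hx => ⟨p.1, hp, hx⟩, by rintro ⟨t, rfl, hx⟩; exact hx⟩
  · exact ⟨False.elim, by rintro ⟨t, rfl, -⟩; exact hp rfl⟩

theorem mem_WS_split_iff {p : T × Bool} {x : X} :
    x ∈ τ.split.WS p ↔ ∃ t, p = τ.wrPart t ∧ x ∈ τ.WS t := by
  simp only [split]
  split_ifs with hp
  · exact ⟨fun hx => ⟨p.1, hp, hx⟩, by rintro ⟨t, rfl, hx⟩; rwa [fst_wrPart]⟩
  · exact ⟨False.elim, by rintro ⟨t, rfl, -⟩; exact hp (by rw [fst_wrPart])⟩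

theorem wrPart_mem_WS_split_iff {t : T} {x : X} : x ∈ τ.split.WS (τ.wrPart t) ↔ x ∈ τ.WS t := by
  simp only [mem_WS_split_iff, τ.wrPart_injective.eq_iff, exists_eq_left']

/-- The visibility relation on transactions read off from an order `r` of their parts:
`v` sees `u` when the write part of `u` precedes the read part of `v`. -/
def inducedVis (r : T × Bool → T × Bool → Prop) (u v : T) : Prop := r (τ.wrPart u) (rdPart v)

/-- The arbitration relation on transactions read off from an order `r` of their parts: the order
of the write parts. -/
def inducedArb (r : T × Bool → T × Bool → Prop) (u v : T) : Prop := r (τ.wrPart u) (τ.wrPart v)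

/-- Every transaction other than `t0` (whose two parts coincide) reads before it writes. -/
def ReadsBeforeWrites (r : T × Bool → T × Bool → Prop) : Prop :=
  ∀ t, t ≠ τ.t0 → r (rdPart t) (τ.wrPart t)

variable {r : T × Bool → T × Bool → Prop}

theorem coArb_split_iff [IsTrans (T × Bool) r] :
    τ.split.CoArb r ↔ τ.ReadsBeforeWrites r ∧
      (∀ u v, τ.vis0 u v → τ.inducedVis r u v) ∧ ∀ u v, τ.stoR u v → τ.inducedArb r u v := by
  have split_po : (∀ p q, τ.split.po p q → r p q) ↔
      τ.ReadsBeforeWrites r ∧ ∀ u v, τ.po u v → τ.inducedVis r u v := by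
    rw [split, forall_transGen_imp_iff]
    constructor
    · exact fun h => ⟨fun t ht => h _ _ (.inl ⟨t, ht, rfl, rfl⟩),
        fun u v huv => h _ _ (.inr ⟨u, v, huv, rfl, rfl⟩)⟩
    · rintro ⟨hrw, hpo⟩ p q (⟨t, ht, rfl, rfl⟩ | ⟨u, v, huv, rfl, rfl⟩)
      exacts [hrw t ht, hpo u v huv]
  have split_rf : (∀ p q, τ.split.rfR p q → r p q) ↔
      ∀ u v, τ.rfR u v → τ.inducedVis r u v :=
    ⟨fun h u v ⟨x, hx⟩ => h _ _ ⟨x, u, v, hx, rfl, rfl⟩,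
      by rintro h p q ⟨x, u, v, hx, rfl, rfl⟩; exact h u v ⟨x, hx⟩⟩
  have split_sto : (∀ p q, τ.split.stoR p q → r p q) ↔
      ∀ u v, τ.stoR u v → τ.inducedArb r u v :=
    ⟨fun h u v ⟨x, hx⟩ => h _ _ ⟨x, u, v, hx, rfl, rfl⟩,
      by rintro h p q ⟨x, u, v, hx, rfl, rfl⟩; exact h u v ⟨x, hx⟩⟩
  rw [CoArb, forall_transGen_imp_iff]
  simp only [arb0, vis0, or_imp, forall_and, split_po, split_rf, split_sto, and_assoc]

theorem retVal_split_iff {vis arb : T × Bool → T × Bool → Prop} :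
    τ.split.RetVal vis arb ↔ τ.RetVal (τ.inducedVis vis) (τ.inducedArb arb) := by
  constructor
  · intro h t x hx
    obtain ⟨p, ⟨hvis, hW⟩, hmax, u, v, hrf, rfl, hv⟩ :=
      h (rdPart t) x (τ.mem_RS_split_iff.2 ⟨t, rfl, hx⟩)
    obtain rfl : t = v := congrArg Prod.fst hv
    exact ⟨u, ⟨hvis, τ.wrPart_mem_WS_split_iff.1 hW⟩, fun w hw hxw hne =>
      hmax _ hw (τ.wrPart_mem_WS_split_iff.2 hxw) (τ.wrPart_injective.ne hne), hrf⟩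
  · intro h p x hx
    obtain ⟨t, rfl, hxt⟩ := τ.mem_RS_split_iff.1 hx
    obtain ⟨u, ⟨hvis, hW⟩, hmax, hrf⟩ := h t x hxt
    refine ⟨τ.wrPart u, ⟨hvis, τ.wrPart_mem_WS_split_iff.2 hW⟩, fun q hq hxq hne => ?_,
      u, t, hrf, rfl, rfl⟩
    obtain ⟨w, rfl, hxw⟩ := τ.mem_WS_split_iff.1 hxq
    exact hmax w hq hxw (ne_of_apply_ne τ.wrPart hne)

theorem inducedArb_of_inducedVis [IsTrans (T × Bool) r] (hrw : τ.ReadsBeforeWrites r) {u v : T}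
    (h : τ.inducedVis r u v) : τ.inducedArb r u v := by
  by_cases hv : v = τ.t0
  · rwa [inducedArb, ← τ.rdPart_eq_wrPart_iff.2 hv]
  · exact trans_of r h (hrw v hv)

theorem prefixAx_induced [IsTrans (T × Bool) r] : PrefixAx (τ.inducedVis r) (τ.inducedArb r) :=
  fun _ _ _ => trans_of r

theorem goodPair_induced (hr : StrictTotalRel r) (hrw : τ.ReadsBeforeWrites r) :
    GoodPair (τ.inducedVis r) (τ.inducedArb r) := by
  have := hr.1.isTrans
  have vis_imp_arb (u v : T) : τ.inducedVis r u v → τ.inducedArb r u v :=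
    τ.inducedArb_of_inducedVis hrw
  exact ⟨⟨fun t h => hr.1.1 _ (vis_imp_arb t t h),
      fun u v w huv => τ.prefixAx_induced u v w (vis_imp_arb u v huv)⟩,
    ⟨⟨fun _ => hr.1.1 _, fun _ _ _ => hr.1.2 _ _ _⟩,
      fun _ _ huv => hr.2 _ _ (τ.wrPart_injective.ne huv)⟩,
    vis_imp_arb⟩

end SplitTrace

section Position

variable [LinearOrder T] (seen : T → LowerSet T)

/-- The position of a part in the serialization built from the lower sets `seen t` of transactions
visible to `t`: the cut of writes that precede it, then its kind (`false` for reads), then its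
transaction. The dummy part `(t0, true)` is treated as a read part of `t0`. -/
noncomputable def position (p : T × Bool) : LowerSet T ×ₗ Bool ×ₗ T :=
  if p = τ.wrPart p.1 then toLex (LowerSet.Iio p.1, toLex (true, p.1))
  else toLex (seen p.1, toLex (false, p.1))

theorem position_wrPart (t : T) :
    τ.position seen (τ.wrPart t) = toLex (LowerSet.Iio t, toLex (true, t)) := by
  simp only [position, fst_wrPart, if_true]

theorem position_rdPart {t : T} (ht : t ≠ τ.t0) :
    τ.position seen (rdPart t) = toLex (seen t, toLex (false, t)) :=
  if_neg (mt τ.rdPart_eq_wrPart_iff.1 ht)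

theorem position_injective : Function.Injective (τ.position seen) := by
  rintro ⟨t, b⟩ ⟨s, c⟩ h
  unfold position at h
  split_ifs at h with hp hq hq <;>
    simp only [EmbeddingLike.apply_eq_iff_eq, Prod.mk.injEq, Bool.true_eq_false,
      Bool.false_eq_true, false_and, and_false, true_and] at h
  · rw [hp, hq, h.2]
  · obtain ⟨-, rfl⟩ := h
    have not_write {d : Bool} (hd : (t, d) ≠ τ.wrPart t) : d = !(τ.wrPart t).2 :=
      Bool.eq_not_of_ne fun h => hd (Prod.ext (τ.fst_wrPart t).symm h)
    rw [not_write hp, not_write hq]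

variable {seen}

theorem position_wrPart_lt_wrPart {u v : T} :
    τ.position seen (τ.wrPart u) < τ.position seen (τ.wrPart v) ↔ u < v := by
  simp only [position_wrPart, Prod.Lex.toLex_lt_toLex, lowerSet_Iio_lt_iff_mem,
    LowerSet.mem_Iio_iff, lt_irrefl, false_or, true_and]
  exact or_iff_left_of_imp And.right

theorem position_wrPart_lt_rdPart {u v : T} (hv : v ≠ τ.t0) :
    τ.position seen (τ.wrPart u) < τ.position seen (rdPart v) ↔ u ∈ seen v := by
  simp [position_wrPart, position_rdPart _ _ hv, Prod.Lex.toLex_lt_toLex,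
    lowerSet_Iio_lt_iff_mem]

theorem position_rdPart_lt_wrPart {t : T} (ht : t ≠ τ.t0) (hseen : seen t ≤ LowerSet.Iio t) :
    τ.position seen (rdPart t) < τ.position seen (τ.wrPart t) := by
  rw [position_wrPart, position_rdPart _ _ ht, Prod.Lex.toLex_lt_toLex]
  exact hseen.lt_or_eq.imp_right fun h => ⟨h, Prod.Lex.toLex_lt_toLex.2 (.inl Bool.false_lt_true)⟩

end Position

theorem exists_order_inducing {vis arb : T → T → Prop} (harb : StrictTotalRel arb)
    (vis_imp_arb : ∀ u v, vis u v → arb u v) (hprefix : PrefixAx vis arb)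
    (hinit : ∀ t, t ≠ τ.t0 → arb τ.t0 t) :
    ∃ r, StrictTotalRel r ∧ τ.ReadsBeforeWrites r ∧
      τ.inducedVis r = vis ∧ τ.inducedArb r = arb := by
  have := harb.isStrictTotalOrder
  let : LinearOrder T := linearOrderOfSTO arb
  let seen (t : T) : LowerSet T :=
    ⟨{u | vis u t}, fun v u huv hv => huv.elim (fun h => h ▸ hv) fun h => hprefix u v t h hv⟩
  have position_wrPart_lt (u v : T) :
      τ.position seen (τ.wrPart u) < τ.position seen (τ.wrPart v) ↔ arb u v :=
    τ.position_wrPart_lt_wrPart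
  have not_arb_init (u : T) : ¬ arb u τ.t0 := fun hu =>
    have hne : u ≠ τ.t0 := fun h => harb.1.1 u (h ▸ hu)
    harb.1.1 u (harb.1.2 _ _ _ hu (hinit u hne))
  refine ⟨fun p q => τ.position seen p < τ.position seen q,
    strictTotalRel_of_injective (τ.position_injective seen),
    fun t ht => τ.position_rdPart_lt_wrPart ht fun u => vis_imp_arb u t,
    funext₂ fun u v => propext ?_, funext₂ fun u v => propext (position_wrPart_lt u v)⟩
  by_cases hv : v = τ.t0
  · subst hv
    rw [inducedVis, τ.rdPart_eq_wrPart_iff.2 rfl, position_wrPart_lt]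
    exact iff_of_false (not_arb_init u) (mt (vis_imp_arb u _) (not_arb_init u))
  · exact τ.position_wrPart_lt_rdPart hv

end TxnTrace

theorem pc_iff_split_ser_general {T X V : Type*} (τ : TxnTrace T X V) (hwf : τ.WellFormed) :
    τ.IsPC ↔ τ.split.IsSER := by
  constructor
  · rintro ⟨vis, arb, hgood, hpoco, hcoarb, hret, hprefix⟩
    have hinit : ∀ t, t ≠ τ.t0 → arb τ.t0 t :=
      fun t ht => hcoarb _ _ (.single (.inl (hwf.po_init t ht)))
    have ⟨hvis0, hsto⟩ := (τ.poCo_and_coArb_iff hgood).1 ⟨hpoco, hcoarb⟩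
    obtain ⟨r, hr, hrw, rfl, rfl⟩ := τ.exists_order_inducing hgood.2.1 hgood.2.2 hprefix hinit
    have := hr.1.isTrans
    exact ⟨r, hr, τ.coArb_split_iff.2 ⟨hrw, hvis0, hsto⟩, τ.retVal_split_iff.2 hret⟩
  · rintro ⟨r, hr, hcoarb_split, hret⟩
    have := hr.1.isTrans
    obtain ⟨hrw, hvis0, hsto⟩ := τ.coArb_split_iff.1 hcoarb_split
    have hgood := τ.goodPair_induced hr hrw
    obtain ⟨hpoco, hcoarb⟩ := (τ.poCo_and_coArb_iff hgood).2 ⟨hvis0, hsto⟩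
    exact ⟨_, _, hgood, hpoco, hcoarb, τ.retVal_split_iff.1 hret, τ.prefixAx_induced⟩

/-- Lemma 4: a trace is PC iff its split trace is SER. -/
theorem pc_iff_split_ser {T X V : Type*} [Fintype T] (τ : TxnTrace T X V)
    (hwf : τ.WellFormed) : τ.IsPC ↔ τ.split.IsSER :=
  pc_iff_split_ser_general τ hwf
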